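/- (Convergence of nonlocal to local solutions in the nonlocal energy norm.) Let d ≥ 1, let Ω ⊂ ℝ^d be bounded and open, let δ₀ ∈ (0,1], μ ∈ {0,1}, and A, B, M, K, K' > 0. Then there is a constant C > 0, depending only on d, Ω, δ₀, A, B, M, K, K', with the following property. Let δ ∈ (0,δ₀], let γ̃ satisfy the radial kernel conditions with horizon δ in dimension d with ∫_{B_δ(0)} γ̃(|z|) dz ≤ K δ^{-2}, and suppose the Lebesgue measure of Ω_δ^c satisfies |Ω_δ^c| ≤ K' δ. Let u₀ : ℝ^d → ℝ be four times continuously differentiable on an open neighborhood of the closure of Ω̂_δ with ‖D^j u₀(y)‖ ≤ M for all y ∈ Ω̂_δ and j = 0,1,2,3,4, and set f₀ = −Δu₀ on Ω. Let f_δ : Ω → ℝ satisfy sup_{x∈Ω} |f_δ(x) − f₀(x)| ≤ A δ², let g_δ : Ω_δ^c → ℝ satisfy sup_{x∈Ω_δ^c} |g_δ(x) − u₀(x)| ≤ B δ^{2+μ}, and let u : Ω̂_δ → ℝ be bounded and measurable with −2∫_{Ω̂_δ} (u(y) − u(x)) γ̃(|y−x|) dy = f_δ(x) for every x ∈ Ω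 and u = g_δ on Ω_δ^c. Then ‖u − u₀‖_δ ≤ C δ^{(3+μ)/2}, where ‖w‖_δ = (∫_{Ω̂_δ}∫_{Ω̂_δ} (w(y) − w(x))² γ̃(|y−x|) dy dx)^{1/2}. -/

import Mathlib

open MeasureTheory Metric Set

noncomputable section

/-- Surface measure of the unit sphere in `ℝ^d`, expressed as `d` times the volume
of the unit ball. -/
def unitSphereArea (d : ℕ) : ℝ :=
  d * (volume (ball (0 : EuclideanSpace ℝ (Fin d)) 1)).toReal

/-- The radial kernel conditions with horizon `δ` in dimension `d`. -/
def RadialKernel (d : ℕ) (δ : ℝ) (γ : ℝ → ℝ) : Prop :=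
  Measurable γ ∧ (∀ s, 0 < s → s < δ → 0 < γ s) ∧ (∀ s, δ ≤ s → γ s = 0) ∧
    IntegrableOn γ (Ioo 0 δ) ∧
    unitSphereArea d * (∫ s in Ioo 0 δ, s ^ (d + 1) * γ s) = d

/-- The part of the complement of `Ω` within distance `δ` of the boundary. -/
def omegaC {d : ℕ} (Ω : Set (EuclideanSpace ℝ (Fin d))) (δ : ℝ) :
    Set (EuclideanSpace ℝ (Fin d)) :=
  {y | y ∉ Ω ∧ infDist y (frontier Ω) < δ}

/-- `Ω̂_δ = Ω ∪ Ω_δ^c`. -/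
def hatΩ {d : ℕ} (Ω : Set (EuclideanSpace ℝ (Fin d))) (δ : ℝ) :
    Set (EuclideanSpace ℝ (Fin d)) :=
  Ω ∪ omegaC Ω δ

/-- The Laplacian of `u : ℝ^d → ℝ`, as the trace of the second derivative. -/
def lap (d : ℕ) (u : EuclideanSpace ℝ (Fin d) → ℝ) (x : EuclideanSpace ℝ (Fin d)) : ℝ :=
  ∑ i : Fin d, iteratedFDeriv ℝ 2 u x ![EuclideanSpace.single i 1, EuclideanSpace.single i 1]

/-! Write `w = u - u₀` and let `L` be the nonlocal Laplacian on `Ω̂_δ`. Since the kernel is even,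
symmetrising the double integral gives `‖w‖_δ² = -∫ w * L w`, an integral over `Ω` and the collar
`Ω_δ^c`. On `Ω` the residual `L w` is `O(δ²)`: the kernel is even and isotropic with second moment
`d`, so Taylor expansion to fourth order gives `L u₀ = Δu₀ + O(δ²)`. As `L ‖·‖² = 2d` on `Ω`, the
maximum principle with barrier `‖·‖²` yields `w = O(δ²)` on all of `Ω̂_δ`. On the collar `L w` is
only `O(1)`, being at most `4 ‖w‖_∞ ∫ γ̃` with `∫ γ̃ = O(δ⁻²)`, but there `w = O(δ^{2+μ})` and the
volume is `O(δ)`. Altogether `‖w‖_δ² = O(δ⁴ + δ^{3+μ})`. -/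

section NonlocalOperator

variable {E : Type*} [AddGroup E] [MeasurableSpace E] {ν : Measure E} {H Ω : Set E}
  {k w v : E → ℝ} {x : E}

/-- The nonlocal Laplacian on `H` with interaction kernel `k`, normalised by the factor `2` so that
it approximates the Laplacian when the second moment of `k` is the dimension. -/
def nonlocalLaplacian (ν : Measure E) (H : Set E) (k w : E → ℝ) (x : E) : ℝ :=
  2 * ∫ y in H, (w y - w x) * k (y - x) ∂ν

/-- The nonlocal Dirichlet energy on `H` with interaction kernel `k`: the square of the nonlocal
energy norm `‖w‖_δ`. -/
def nonlocalEnergy (ν : Measure E) (H : Set E) (k w : E → ℝ) : ℝ :=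
  ∫ x in H, ∫ y in H, (w y - w x) ^ 2 * k (y - x) ∂ν ∂ν

lemma nonlocalLaplacian_const_mul (c : ℝ) :
    nonlocalLaplacian ν H k (fun y => c * w y) x = c * nonlocalLaplacian ν H k w x := by
  simp only [nonlocalLaplacian, ← mul_sub, mul_assoc, integral_const_mul, mul_left_comm c 2]

lemma nonlocalLaplacian_neg :
    nonlocalLaplacian ν H k (-w) x = -nonlocalLaplacian ν H k w x := by
  simpa only [neg_one_mul] using! nonlocalLaplacian_const_mul (w := w) (-1)

lemma nonlocalLaplacian_add (hw : IntegrableOn (fun y => (w y - w x) * k (y - x)) H ν)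
    (hv : IntegrableOn (fun y => (v y - v x) * k (y - x)) H ν) :
    nonlocalLaplacian ν H k (w + v) x =
      nonlocalLaplacian ν H k w x + nonlocalLaplacian ν H k v x := by
  simp only [nonlocalLaplacian, ← mul_add, ← integral_add hw hv, Pi.add_apply, ← add_mul,
    add_sub_add_comm]

lemma nonlocalLaplacian_sub (hw : IntegrableOn (fun y => (w y - w x) * k (y - x)) H ν)
    (hv : IntegrableOn (fun y => (v y - v x) * k (y - x)) H ν) :
    nonlocalLaplacian ν H k (w - v) x =
      nonlocalLaplacian ν H k w x - nonlocalLaplacian ν H k v x := by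
  simp only [nonlocalLaplacian, ← mul_sub, ← integral_sub hw hv, Pi.sub_apply, ← sub_mul,
    sub_sub_sub_comm]

section TranslationInvariance

variable [MeasurableAdd E] [ν.IsAddRightInvariant]

lemma setIntegral_kernel_sub_right_le (hk : Integrable k ν) (hk0 : 0 ≤ᵐ[ν] k) (x : E) :
    ∫ y in H, k (y - x) ∂ν ≤ ∫ z, k z ∂ν := by
  rw [← integral_sub_right_eq_self k x]
  exact setIntegral_le_integral (hk.comp_sub_right x)
    ((measurePreserving_sub_right ν x).quasiMeasurePreserving.ae hk0)

lemma integrableOn_sub_mul_kernel (hk : Integrable k ν) (hH : MeasurableSet H)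
    (hw : AEStronglyMeasurable w (ν.restrict H)) {b : ℝ} (hb : ∀ y ∈ H, |w y| ≤ b) (x : E) :
    IntegrableOn (fun y => (w y - w x) * k (y - x)) H ν := by
  refine (hk.comp_sub_right x).integrableOn.bdd_mul (c := b + |w x|)
    (hw.sub aestronglyMeasurable_const) ?_
  filter_upwards [ae_restrict_mem hH] with y hy
  exact (abs_sub _ _).trans (by gcongr; exact hb y hy)

lemma nonlocalLaplacian_le_of_forall_le (hk : Integrable k ν) (hk0 : 0 ≤ᵐ[ν] k)
    (hH : MeasurableSet H) (hw : IntegrableOn (fun y => (w y - w x) * k (y - x)) H ν)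
    (hx : x ∈ H) {s : ℝ} (hs : ∀ y ∈ H, w y ≤ s) :
    nonlocalLaplacian ν H k w x ≤ 2 * ((s - w x) * ∫ z, k z ∂ν) := by
  have hk0x : ∀ᵐ y ∂ν, 0 ≤ k (y - x) :=
    (measurePreserving_sub_right ν x).quasiMeasurePreserving.ae hk0
  have hle : ∫ y in H, (w y - w x) * k (y - x) ∂ν ≤ ∫ y in H, (s - w x) * k (y - x) ∂ν := by
    refine setIntegral_mono_on_ae hw ((hk.comp_sub_right x).const_mul _).integrableOn hH ?_
    filter_upwards [hk0x] with y hky hy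
    gcongr
    exact hs y hy
  have hs0 : 0 ≤ s - w x := sub_nonneg.2 (hs x hx)
  rw [integral_const_mul] at hle
  unfold nonlocalLaplacian
  grw [hle, setIntegral_kernel_sub_right_le hk hk0 x]

lemma abs_nonlocalLaplacian_le (hk : Integrable k ν) (hk0 : 0 ≤ᵐ[ν] k) (hH : MeasurableSet H)
    (hw : AEStronglyMeasurable w (ν.restrict H)) {b : ℝ} (hb : ∀ y ∈ H, |w y| ≤ b) (hx : x ∈ H) :
    |nonlocalLaplacian ν H k w x| ≤ 4 * b * ∫ z, k z ∂ν := by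
  have hk_int : 0 ≤ ∫ z, k z ∂ν := integral_nonneg_of_ae hk0
  have upper : ∀ v : E → ℝ, AEStronglyMeasurable v (ν.restrict H) → (∀ y ∈ H, |v y| ≤ b) →
      nonlocalLaplacian ν H k v x ≤ 4 * b * ∫ z, k z ∂ν := fun v hv hvb =>
    calc nonlocalLaplacian ν H k v x ≤ 2 * ((b - v x) * ∫ z, k z ∂ν) :=
          nonlocalLaplacian_le_of_forall_le hk hk0 hH (integrableOn_sub_mul_kernel hk hH hv hvb x)
            hx fun y hy => (le_abs_self _).trans (hvb y hy)
      _ ≤ 2 * ((b + b) * ∫ z, k z ∂ν) := by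
          have := neg_le_of_abs_le (hvb x hx)
          gcongr
          linarith
      _ = 4 * b * ∫ z, k z ∂ν := by ring
  refine abs_le'.2 ⟨upper w hw hb, ?_⟩
  simpa only [nonlocalLaplacian_neg] using upper (-w) hw.neg (by simpa only [Pi.neg_apply, abs_neg])

lemma le_of_forall_le_nonlocalLaplacian (hk : Integrable k ν) (hk0 : 0 ≤ᵐ[ν] k)
    (hH : MeasurableSet H) (hw : BddAbove (w '' H)) {η m : ℝ} (hη : 0 < η)
    (hΩ : ∀ x ∈ Ω, η ≤ nonlocalLaplacian ν H k w x) (hm : ∀ x ∈ H \ Ω, w x ≤ m) :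
    ∀ x ∈ H, w x ≤ m := by
  intro x₀ hx₀
  by_contra! hlt
  set s := sSup (w '' H)
  set I := ∫ z, k z ∂ν
  have hI : 0 ≤ I := integral_nonneg_of_ae hk0
  have hs : ∀ y ∈ H, w y ≤ s := fun y hy => le_csSup hw (mem_image_of_mem w hy)
  obtain ⟨ε, hε, hεm, hεη⟩ : ∃ ε > 0, ε ≤ s - m ∧ 2 * (ε * I) < η := by
    refine ⟨min (s - m) (η / (2 * (I + 1))),
      lt_min (by linarith [hs x₀ hx₀]) (by positivity), min_le_left _ _, ?_⟩
    calc 2 * (min (s - m) (η / (2 * (I + 1))) * I) ≤ 2 * (η / (2 * (I + 1)) * I) := by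
          gcongr
          exact min_le_right _ _
      _ = η * (I / (I + 1)) := by field_simp
      _ < η := mul_lt_of_lt_one_right hη ((div_lt_one (by positivity)).2 (lt_add_one I))
  obtain ⟨_, ⟨x, hx, rfl⟩, hxs⟩ :=
    exists_lt_of_lt_csSup ⟨_, mem_image_of_mem w hx₀⟩ (show s - ε < s by linarith)
  have hxΩ : x ∈ Ω := by
    by_contra hn
    linarith [hm x ⟨hx, hn⟩]
  have hint : IntegrableOn (fun y => (w y - w x) * k (y - x)) H ν := by
    refine .of_integral_ne_zero fun h0 => ?_
    have := hΩ x hxΩ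
    rw [nonlocalLaplacian, h0] at this
    linarith
  have hsmall : (s - w x) * I ≤ ε * I := by gcongr; linarith
  linarith [hΩ x hxΩ, nonlocalLaplacian_le_of_forall_le hk hk0 hH hint hx hs]

end TranslationInvariance

section Energy

variable [MeasurableAdd₂ E] [MeasurableNeg E] [SFinite ν] [ν.IsAddRightInvariant]

lemma integrable_kernel_sub_prod (hkm : Measurable k) (hk : Integrable k ν) (hH : ν H < ⊤) :
    Integrable (fun p : E × E => k (p.2 - p.1)) ((ν.restrict H).prod (ν.restrict H)) := by
  have : IsFiniteMeasure (ν.restrict H) := ⟨by simpa using hH⟩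
  have hm : Measurable fun p : E × E => k (p.2 - p.1) := by fun_prop
  rw [integrable_prod_iff hm.aestronglyMeasurable]
  refine ⟨.of_forall fun x => (hk.comp_sub_right x).integrableOn,
    .of_bound hm.norm.stronglyMeasurable.integral_prod_right.aestronglyMeasurable
      (∫ z, ‖k z‖ ∂ν) (.of_forall fun x => ?_)⟩
  rw [Real.norm_of_nonneg (integral_nonneg fun y => norm_nonneg _)]
  exact setIntegral_kernel_sub_right_le hk.norm (.of_forall fun z => norm_nonneg _) x

lemma integrable_mul_sub_mul_kernel_prod (hkm : Measurable k) (hk : Integrable k ν)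
    (hH : MeasurableSet H) (hHν : ν H < ⊤) (hw : AEStronglyMeasurable w (ν.restrict H))
    {b : ℝ} (hb : ∀ y ∈ H, |w y| ≤ b) :
    Integrable (fun p : E × E => w p.1 * ((w p.2 - w p.1) * k (p.2 - p.1)))
      ((ν.restrict H).prod (ν.restrict H)) := by
  have : IsFiniteMeasure (ν.restrict H) := ⟨by simpa using hHν⟩
  simp only [← mul_assoc]
  refine (integrable_kernel_sub_prod hkm hk hHν).bdd_mul (c := b * (b + b))
    (hw.comp_fst.mul (hw.comp_snd.sub hw.comp_fst)) ?_
  rw [Measure.prod_restrict]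
  filter_upwards [ae_restrict_mem (hH.prod hH)] with p ⟨hp₁, hp₂⟩
  have hb0 : 0 ≤ b := (abs_nonneg _).trans (hb _ hp₁)
  rw [norm_mul]
  gcongr
  · exact hb _ hp₁
  · exact (abs_sub _ _).trans (add_le_add (hb _ hp₂) (hb _ hp₁))

lemma integrableOn_mul_nonlocalLaplacian (hkm : Measurable k) (hk : Integrable k ν)
    (hH : MeasurableSet H) (hHν : ν H < ⊤) (hw : AEStronglyMeasurable w (ν.restrict H))
    {b : ℝ} (hb : ∀ y ∈ H, |w y| ≤ b) :
    IntegrableOn (fun x => w x * nonlocalLaplacian ν H k w x) H ν := by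
  refine ((integrable_mul_sub_mul_kernel_prod hkm hk hH hHν hw hb).integral_prod_left.const_mul
    2).congr (.of_forall fun x => ?_)
  simp only [nonlocalLaplacian, integral_const_mul, mul_left_comm]

lemma nonlocalEnergy_eq_neg_integral (hkm : Measurable k) (hk : Integrable k ν)
    (hk_even : ∀ z, k (-z) = k z) (hH : MeasurableSet H) (hHν : ν H < ⊤)
    (hw : AEStronglyMeasurable w (ν.restrict H)) {b : ℝ} (hb : ∀ y ∈ H, |w y| ≤ b) :
    nonlocalEnergy ν H k w = -∫ x in H, w x * nonlocalLaplacian ν H k w x ∂ν := by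
  set ρ := ν.restrict H
  set F : E × E → ℝ := fun p => w p.1 * ((w p.2 - w p.1) * k (p.2 - p.1))
  have hF : Integrable F (ρ.prod ρ) := integrable_mul_sub_mul_kernel_prod hkm hk hH hHν hw hb
  have hsq : ∀ p : E × E, (w p.2 - w p.1) ^ 2 * k (p.2 - p.1) = -(F p.swap + F p) := by
    intro p
    simp only [F, Prod.fst_swap, Prod.snd_swap, ← hk_even (p.1 - p.2), neg_sub]
    ring
  calc nonlocalEnergy ν H k w = ∫ p, (w p.2 - w p.1) ^ 2 * k (p.2 - p.1) ∂ρ.prod ρ := by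
        refine (integral_prod (fun p : E × E => (w p.2 - w p.1) ^ 2 * k (p.2 - p.1)) ?_).symm
        simp only [hsq]
        exact (hF.swap.add hF).neg
    _ = -(2 * ∫ p, F p ∂ρ.prod ρ) := by
        simp only [hsq]
        rw [integral_neg, integral_add (f := fun p => F p.swap) hF.swap hF, integral_prod_swap F,
          two_mul]
    _ = -∫ x in H, w x * nonlocalLaplacian ν H k w x ∂ν := by
        rw [integral_prod F hF, ← integral_const_mul]
        simp only [F, nonlocalLaplacian, integral_const_mul, mul_left_comm (2 : ℝ), ρ]

lemma nonlocalEnergy_union_le {S : Set E} (hkm : Measurable k) (hk : Integrable k ν)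
    (hk0 : 0 ≤ᵐ[ν] k) (hk_even : ∀ z, k (-z) = k z) (hΩ : MeasurableSet Ω) (hS : MeasurableSet S)
    (hdisj : Disjoint Ω S) (hΩν : ν Ω < ⊤) (hSν : ν S < ⊤)
    (hw : AEStronglyMeasurable w (ν.restrict (Ω ∪ S))) {b η β : ℝ} (hb : ∀ y ∈ Ω ∪ S, |w y| ≤ b)
    (hη : ∀ x ∈ Ω, |nonlocalLaplacian ν (Ω ∪ S) k w x| ≤ η) (hβ : ∀ x ∈ S, |w x| ≤ β) :
    nonlocalEnergy ν (Ω ∪ S) k w ≤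
      b * η * ν.real Ω + β * (4 * b * ∫ z, k z ∂ν) * ν.real S := by
  set L := nonlocalLaplacian ν (Ω ∪ S) k w
  have hH : MeasurableSet (Ω ∪ S) := hΩ.union hS
  have hHν : ν (Ω ∪ S) < ⊤ := measure_union_lt_top hΩν hSν
  have hint : IntegrableOn (fun x => w x * L x) (Ω ∪ S) ν :=
    integrableOn_mul_nonlocalLaplacian hkm hk hH hHν hw hb
  have hΩ_le : ‖∫ x in Ω, w x * L x ∂ν‖ ≤ b * η * ν.real Ω := by
    refine norm_setIntegral_le_of_norm_le_const hΩν fun x hx => ?_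
    rw [norm_mul]
    exact mul_le_mul (hb x (.inl hx)) (hη x hx) (norm_nonneg _)
      ((abs_nonneg _).trans (hb x (.inl hx)))
  have hS_le : ‖∫ x in S, w x * L x ∂ν‖ ≤ β * (4 * b * ∫ z, k z ∂ν) * ν.real S := by
    refine norm_setIntegral_le_of_norm_le_const hSν fun x hx => ?_
    rw [norm_mul]
    exact mul_le_mul (hβ x hx) (abs_nonlocalLaplacian_le hk hk0 hH hw hb (.inr hx))
      (norm_nonneg _) ((abs_nonneg _).trans (hβ x hx))
  rw [nonlocalEnergy_eq_neg_integral hkm hk hk_even hH hHν hw hb,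
    setIntegral_union hdisj hS hint.left_of_union hint.right_of_union]
  linarith [neg_le_of_abs_le hΩ_le, neg_le_of_abs_le hS_le]

end Energy

end NonlocalOperator

section SecondDifference

variable {E : Type*} [AddCommGroup E] [MeasurableSpace E] [MeasurableAdd E]
  {ν : Measure E} [ν.IsAddLeftInvariant] {H : Set E} {k w : E → ℝ} {x : E}

lemma integrable_add_sub_mul_kernel (hxH : ∀ y ∉ H, k (y - x) = 0)
    (hw : IntegrableOn (fun y => (w y - w x) * k (y - x)) H ν) :
    Integrable (fun z => (w (x + z) - w x) * k z) ν := by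
  have hw' : Integrable (fun y => (w y - w x) * k (y - x)) ν := by
    refine (integrableOn_iff_integrable_of_support_subset fun y hy => ?_).1 hw
    by_contra hyH
    exact hy (by simp [hxH y hyH])
  simpa using hw'.comp_add_left x

variable [MeasurableNeg E] [ν.IsNegInvariant]

lemma integrable_second_difference_mul_kernel (hk_even : ∀ z, k (-z) = k z)
    (hxH : ∀ y ∉ H, k (y - x) = 0)
    (hw : IntegrableOn (fun y => (w y - w x) * k (y - x)) H ν) :
    Integrable (fun z => (w (x + z) + w (x - z) - 2 * w x) * k z) ν := by
  have hadd := integrable_add_sub_mul_kernel hxH hw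
  refine (hadd.add hadd.comp_neg).congr (.of_forall fun z => ?_)
  simp only [Pi.add_apply, hk_even, ← sub_eq_add_neg]
  ring

lemma nonlocalLaplacian_eq_integral_second_difference (hk_even : ∀ z, k (-z) = k z)
    (hxH : ∀ y ∉ H, k (y - x) = 0)
    (hw : IntegrableOn (fun y => (w y - w x) * k (y - x)) H ν) :
    nonlocalLaplacian ν H k w x = ∫ z, (w (x + z) + w (x - z) - 2 * w x) * k z ∂ν := by
  have hadd := integrable_add_sub_mul_kernel hxH hw
  have hshift : ∫ y in H, (w y - w x) * k (y - x) ∂ν = ∫ z, (w (x + z) - w x) * k z ∂ν := by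
    rw [setIntegral_eq_integral_of_forall_compl_eq_zero fun y hy => by rw [hxH y hy, mul_zero],
      ← integral_add_left_eq_self _ x]
    simp only [add_sub_cancel_left]
  have hneg : ∫ z, (w (x + z) - w x) * k z ∂ν = ∫ z, (w (x - z) - w x) * k z ∂ν := by
    rw [← integral_neg_eq_self]
    simp only [hk_even, ← sub_eq_add_neg]
  have hsub : Integrable (fun z => (w (x - z) - w x) * k z) ν := by
    simpa only [hk_even, ← sub_eq_add_neg] using hadd.comp_neg
  rw [nonlocalLaplacian, hshift, two_mul]
  nth_rw 2 [hneg]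
  rw [← integral_add hadd hsub]
  congr with z
  ring

end SecondDifference

section Taylor

variable {E F : Type*} [NormedAddCommGroup E] [NormedSpace ℝ E] [NormedAddCommGroup F]
  [NormedSpace ℝ F] {f : E → F} {x y z : E} {M : ℝ}

lemma norm_sub_sum_iteratedFDeriv_le [CompleteSpace F] {n : ℕ}
    (hf : ∀ t ∈ Icc (0 : ℝ) 1, ContDiffAt ℝ (n + 1) f (x + t • y))
    (hM : ∀ t ∈ Icc (0 : ℝ) 1, ‖iteratedFDeriv ℝ (n + 1) f (x + t • y)‖ ≤ M) :
    ‖f (x + y) - ∑ k ∈ Finset.range (n + 1),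
        (k.factorial : ℝ)⁻¹ • iteratedFDeriv ℝ k f x fun _ => y‖ ≤
      M * ‖y‖ ^ (n + 1) / (n + 1).factorial := by
  rw [map_add_eq_sum_add_integral_iteratedFDeriv hf, add_sub_cancel_left, norm_smul, norm_inv,
    RCLike.norm_natCast]
  have hpow : ∫ t in (0 : ℝ)..1, (1 - t) ^ n = 1 / (n + 1) := by
    rw [intervalIntegral.integral_comp_sub_left (· ^ n), integral_pow]
    simp
  have hint : ‖∫ t in (0 : ℝ)..1, (1 - t) ^ n • iteratedFDeriv ℝ (n + 1) f (x + t • y) fun _ => y‖ ≤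
      ∫ t in (0 : ℝ)..1, (1 - t) ^ n * (M * ‖y‖ ^ (n + 1)) := by
    refine intervalIntegral.norm_integral_le_of_norm_le zero_le_one (.of_forall fun t ht => ?_)
      (Continuous.intervalIntegrable (by fun_prop) _ _)
    have ht0 : 0 ≤ 1 - t := sub_nonneg.2 ht.2
    rw [norm_smul, norm_pow, Real.norm_of_nonneg ht0]
    gcongr
    exact (ContinuousMultilinearMap.le_opNorm_mul_pow_of_le _ (pi_norm_const_le y)).trans
      (by gcongr; exact hM t (Ioc_subset_Icc_self ht))
  calc _ ≤ (n.factorial : ℝ)⁻¹ * (1 / (n + 1) * (M * ‖y‖ ^ (n + 1))) := by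
        grw [hint, intervalIntegral.integral_mul_const, hpow]
    _ = _ := by
        rw [Nat.factorial_succ]
        push_cast
        field_simp

lemma norm_second_difference_sub_le [CompleteSpace F]
    (hf : ∀ t ∈ Icc (-1 : ℝ) 1, ContDiffAt ℝ 4 f (x + t • z))
    (hM : ∀ t ∈ Icc (-1 : ℝ) 1, ‖iteratedFDeriv ℝ 4 f (x + t • z)‖ ≤ M) :
    ‖f (x + z) + f (x - z) - (2 : ℝ) • f x - iteratedFDeriv ℝ 2 f x fun _ => z‖ ≤
      M * ‖z‖ ^ 4 / 12 := by
  have hneg : ∀ t ∈ Icc (0 : ℝ) 1, -t ∈ Icc (-1 : ℝ) 1 := fun t ht =>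
    ⟨neg_le_neg ht.2, by linarith [ht.1]⟩
  have hsub : Icc (0 : ℝ) 1 ⊆ Icc (-1) 1 := Icc_subset_Icc_left (by norm_num)
  have hplus := norm_sub_sum_iteratedFDeriv_le (n := 3) (fun t ht => hf t (hsub ht))
    fun t ht => hM t (hsub ht)
  have hminus := norm_sub_sum_iteratedFDeriv_le (n := 3) (x := x) (y := -z) (f := f) (M := M)
    (fun t ht => by simpa [three_add_one_eq_four] using hf (-t) (hneg t ht))
    fun t ht => by simpa using hM (-t) (hneg t ht)
  have hodd : ∀ k, (iteratedFDeriv ℝ k f x fun _ => -z) =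
      (-1 : ℝ) ^ k • iteratedFDeriv ℝ k f x fun _ => z := fun k => by
    simpa using (iteratedFDeriv ℝ k f x).map_smul_univ (fun _ => (-1 : ℝ)) fun _ => z
  rw [norm_neg, ← sub_eq_add_neg] at hminus
  simp only [hodd, Finset.sum_range_succ, Finset.range_zero, Finset.sum_empty,
    iteratedFDeriv_zero_apply] at hplus hminus
  calc _ = _ := congrArg norm ?_
    _ ≤ _ := norm_add_le_of_le hplus hminus
    _ = M * ‖z‖ ^ 4 / 12 := by norm_num [Nat.factorial]; ring
  norm_num [Nat.factorial]
  module

end Taylor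

section Consistency

variable {E : Type*} [NormedAddCommGroup E] [MeasurableSpace E] {ν : Measure E} {k : E → ℝ}

lemma integrable_mul_of_abs_le_norm_sq {f : E → ℝ} {c : ℝ} (hf : AEStronglyMeasurable f ν)
    (hk : AEStronglyMeasurable k ν) (hk2 : Integrable (fun z => ‖z‖ ^ 2 * k z) ν)
    (hfc : ∀ z, |f z| ≤ c * ‖z‖ ^ 2) : Integrable (fun z => f z * k z) ν := by
  refine (hk2.norm.const_mul c).mono' (hf.mul hk) (.of_forall fun z => ?_)
  rw [norm_mul, norm_mul, norm_pow, norm_norm, ← mul_assoc]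
  gcongr
  exact hfc z

variable [NormedSpace ℝ E] [BorelSpace E] [ν.IsAddLeftInvariant] [ν.IsNegInvariant]

lemma abs_nonlocalLaplacian_sub_integral_iteratedFDeriv_le {H : Set E} {u : E → ℝ} {x : E}
    {δ M : ℝ} (hkm : AEStronglyMeasurable k ν) (hk0 : 0 ≤ᵐ[ν] k) (hk_even : ∀ z, k (-z) = k z)
    (hkδ : ∀ z, δ ≤ ‖z‖ → k z = 0) (hk2 : Integrable (fun z => ‖z‖ ^ 2 * k z) ν)
    (hH : ball x δ ⊆ H) (hint : IntegrableOn (fun y => (u y - u x) * k (y - x)) H ν)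
    (hu : ∀ y ∈ ball x δ, ContDiffAt ℝ 4 u y) (hM : ∀ y ∈ ball x δ, ‖iteratedFDeriv ℝ 4 u y‖ ≤ M) :
    |nonlocalLaplacian ν H k u x - ∫ z, (iteratedFDeriv ℝ 2 u x fun _ => z) * k z ∂ν| ≤
      M / 12 * δ ^ 2 * ∫ z, ‖z‖ ^ 2 * k z ∂ν := by
  have hxH : ∀ y ∉ H, k (y - x) = 0 := fun y hy =>
    hkδ _ (by simpa [dist_eq_norm] using fun hyx => hy (hH hyx))
  have hD : Integrable (fun z => (iteratedFDeriv ℝ 2 u x fun _ => z) * k z) ν :=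
    integrable_mul_of_abs_le_norm_sq (by fun_prop : Continuous _).aestronglyMeasurable hkm hk2
      fun z => (iteratedFDeriv ℝ 2 u x).le_opNorm_mul_pow_of_le (pi_norm_const_le z)
  rw [nonlocalLaplacian_eq_integral_second_difference hk_even hxH hint, ← Real.norm_eq_abs,
    ← integral_sub (integrable_second_difference_mul_kernel hk_even hxH hint) hD,
    ← integral_const_mul]
  refine norm_integral_le_of_norm_le (hk2.const_mul _) ?_
  filter_upwards [hk0] with z (hkz : 0 ≤ k z)
  rcases le_or_gt δ ‖z‖ with hz | hz
  · simp [hkδ z hz]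
  have hball : ∀ t ∈ Icc (-1 : ℝ) 1, x + t • z ∈ ball x δ := fun t ht => by
    rw [mem_ball, dist_self_add_left, norm_smul]
    exact (mul_le_of_le_one_left (norm_nonneg z) (abs_le.2 ht)).trans_lt hz
  have hM0 : 0 ≤ M :=
    (norm_nonneg _).trans (hM x (mem_ball_self ((norm_nonneg z).trans_lt hz)))
  have hT := norm_second_difference_sub_le (fun t ht => hu _ (hball t ht))
    fun t ht => hM _ (hball t ht)
  rw [smul_eq_mul] at hT
  calc _ ≤ M * ‖z‖ ^ 4 / 12 * k z := by
        rw [← sub_mul, norm_mul, Real.norm_of_nonneg hkz]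
        gcongr
    _ = M / 12 * ‖z‖ ^ 2 * (‖z‖ ^ 2 * k z) := by ring
    _ ≤ M / 12 * δ ^ 2 * (‖z‖ ^ 2 * k z) := by gcongr

end Consistency

section Isotropy

open scoped InnerProductSpace

variable {E ι : Type*} [NormedAddCommGroup E] [InnerProductSpace ℝ E] [FiniteDimensional ℝ E]
  [MeasurableSpace E] [BorelSpace E] [Fintype ι] {g : ℝ → ℝ} {v w : E}

lemma integral_inner_mul_inner_mul_radial_eq_zero (hvw : ⟪v, w⟫_ℝ = 0) :
    ∫ z, ⟪v, z⟫_ℝ * ⟪w, z⟫_ℝ * g ‖z‖ = 0 := by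
  set r := (ℝ ∙ v)ᗮ.reflection
  have hv (z : E) : ⟪v, r z⟫_ℝ = -⟪v, z⟫_ℝ := by
    rw [← r.symm_symm, ← LinearIsometryEquiv.inner_map_eq_flip, Submodule.reflection_symm,
      Submodule.reflection_orthogonalComplement_singleton_eq_neg, inner_neg_left]
  have hw (z : E) : ⟪w, r z⟫_ℝ = ⟪w, z⟫_ℝ := by
    rw [← r.symm_symm, ← LinearIsometryEquiv.inner_map_eq_flip, Submodule.reflection_symm,
      Submodule.reflection_mem_subspace_eq_self
        (Submodule.mem_orthogonal_singleton_iff_inner_right.2 hvw)]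
  have h := r.measurePreserving.integral_comp r.toHomeomorph.measurableEmbedding
    fun z => ⟪v, z⟫_ℝ * ⟪w, z⟫_ℝ * g ‖z‖
  simp only [hv, hw, r.norm_map, neg_mul, integral_neg] at h
  linarith

lemma integral_inner_sq_mul_radial_congr (hvw : ‖v‖ = ‖w‖) :
    ∫ z, ⟪v, z⟫_ℝ ^ 2 * g ‖z‖ = ∫ z, ⟪w, z⟫_ℝ ^ 2 * g ‖z‖ := by
  set r := (ℝ ∙ (v - w))ᗮ.reflection
  have hv (z : E) : ⟪v, r z⟫_ℝ = ⟪w, z⟫_ℝ := by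
    rw [← r.symm_symm, ← LinearIsometryEquiv.inner_map_eq_flip, Submodule.reflection_symm,
      Submodule.reflection_sub hvw]
  simpa only [hv, r.norm_map] using (r.measurePreserving.integral_comp
    r.toHomeomorph.measurableEmbedding fun z => ⟪v, z⟫_ℝ ^ 2 * g ‖z‖).symm

lemma integrable_inner_mul_inner_mul_radial (hg : Measurable g)
    (hg2 : Integrable fun z : E => ‖z‖ ^ 2 * g ‖z‖) (v w : E) :
    Integrable fun z : E => ⟪v, z⟫_ℝ * ⟪w, z⟫_ℝ * g ‖z‖ := by
  refine integrable_mul_of_abs_le_norm_sq (c := ‖v‖ * ‖w‖)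
    (by fun_prop : Continuous _).aestronglyMeasurable
    (hg.comp measurable_norm).aestronglyMeasurable hg2 fun z => ?_
  rw [abs_mul]
  grw [abs_real_inner_le_norm, abs_real_inner_le_norm]
  exact (by ring : _ = _).le

variable (b : OrthonormalBasis ι ℝ E)

lemma integral_inner_basis_sq_mul_radial (hg : Measurable g)
    (hg2 : Integrable fun z : E => ‖z‖ ^ 2 * g ‖z‖) (i : ι) :
    ∫ z, ⟪b i, z⟫_ℝ ^ 2 * g ‖z‖ = (∫ z : E, ‖z‖ ^ 2 * g ‖z‖) / Fintype.card ι := by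
  have : Nonempty ι := ⟨i⟩
  rw [eq_div_iff (by positivity)]
  calc (∫ z, ⟪b i, z⟫_ℝ ^ 2 * g ‖z‖) * Fintype.card ι
      = ∑ j, ∫ z, ⟪b j, z⟫_ℝ ^ 2 * g ‖z‖ := by
        rw [Finset.sum_congr rfl fun j _ => integral_inner_sq_mul_radial_congr
          ((b.norm_eq_one j).trans (b.norm_eq_one i).symm), Finset.sum_const, Finset.card_univ,
          nsmul_eq_mul, mul_comm]
    _ = ∫ z : E, ‖z‖ ^ 2 * g ‖z‖ := by
        simp only [← b.sum_sq_inner_right, Finset.sum_mul]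
        refine (integral_finsetSum _ fun j _ => ?_).symm
        simpa only [sq] using integrable_inner_mul_inner_mul_radial hg hg2 (b j) (b j)

lemma integral_bilin_mul_radial (hg : Measurable g)
    (hg2 : Integrable fun z : E => ‖z‖ ^ 2 * g ‖z‖) (T : E →L[ℝ] E →L[ℝ] ℝ) :
    ∫ z, T z z * g ‖z‖ =
      (∑ i, T (b i) (b i)) * ((∫ z : E, ‖z‖ ^ 2 * g ‖z‖) / Fintype.card ι) := by
  have hT (z : E) : T z z * g ‖z‖ =
      ∑ i, ∑ j, T (b i) (b j) * (⟪b i, z⟫_ℝ * ⟪b j, z⟫_ℝ * g ‖z‖) := by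
    have hsum : T z z = T (∑ i, ⟪b i, z⟫_ℝ • b i) (∑ j, ⟪b j, z⟫_ℝ • b j) := by rw [b.sum_repr']
    simp only [hsum, map_sum, map_smul, sum_apply, smul_apply, smul_eq_mul, Finset.mul_sum,
      Finset.sum_mul]
    rw [Finset.sum_comm]
    refine Finset.sum_congr rfl fun i _ => Finset.sum_congr rfl fun j _ => ?_
    ring
  have hint (i j : ι) :=
    (integrable_inner_mul_inner_mul_radial hg hg2 (b i) (b j)).const_mul (T (b i) (b j))
  have hcross (i j : ι) (hij : j ≠ i) : ∫ z, ⟪b i, z⟫_ℝ * ⟪b j, z⟫_ℝ * g ‖z‖ = 0 :=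
    integral_inner_mul_inner_mul_radial_eq_zero (b.inner_eq_zero hij.symm)
  simp only [hT]
  rw [integral_finsetSum _ fun i _ => integrable_finsetSum _ fun j _ => hint i j, Finset.sum_mul]
  refine Finset.sum_congr rfl fun i _ => ?_
  rw [integral_finsetSum _ fun j _ => hint i j]
  simp only [integral_const_mul]
  rw [Finset.sum_eq_single i (fun j _ hji => by rw [hcross i j hji, mul_zero]) (by simp)]
  simp only [← sq]
  rw [integral_inner_basis_sq_mul_radial b hg hg2]

end Isotropy

section Barrier

variable {E : Type*} [NormedAddCommGroup E] {H Ω : Set E}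

lemma abs_mul_norm_sq_le {ρ : ℝ} (hρ : H ⊆ closedBall 0 ρ) (t : ℝ) :
    ∀ y ∈ H, |t * ‖y‖ ^ 2| ≤ |t| * ρ ^ 2 := fun y hy => by
  rw [abs_mul, abs_pow, abs_norm]
  gcongr
  exact mem_closedBall_zero_iff.1 (hρ hy)

variable [InnerProductSpace ℝ E] [MeasurableSpace E] [BorelSpace E] {ν : Measure E}
  [ν.IsAddLeftInvariant] [ν.IsNegInvariant] {k w : E → ℝ} {x : E}

lemma nonlocalLaplacian_norm_sq (hk_even : ∀ z, k (-z) = k z) (hxH : ∀ y ∉ H, k (y - x) = 0)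
    (hint : IntegrableOn (fun y => (‖y‖ ^ 2 - ‖x‖ ^ 2) * k (y - x)) H ν) :
    nonlocalLaplacian ν H k (fun y => ‖y‖ ^ 2) x = 2 * ∫ z, ‖z‖ ^ 2 * k z ∂ν := by
  rw [nonlocalLaplacian_eq_integral_second_difference hk_even hxH hint, ← integral_const_mul]
  congr with z
  linear_combination k z * parallelogram_law_with_norm ℝ x z

lemma nonlocalLaplacian_add_mul_norm_sq (hk : Integrable k ν) (hk_even : ∀ z, k (-z) = k z)
    (hH : MeasurableSet H) {ρ : ℝ} (hρ : H ⊆ closedBall 0 ρ) (hxH : ∀ y ∉ H, k (y - x) = 0)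
    (hw : AEStronglyMeasurable w (ν.restrict H)) {b : ℝ} (hb : ∀ y ∈ H, |w y| ≤ b) (t : ℝ) :
    nonlocalLaplacian ν H k (w + fun y => t * ‖y‖ ^ 2) x =
      nonlocalLaplacian ν H k w x + 2 * t * ∫ z, ‖z‖ ^ 2 * k z ∂ν := by
  have hint (s : ℝ) : IntegrableOn (fun y => (s * ‖y‖ ^ 2 - s * ‖x‖ ^ 2) * k (y - x)) H ν :=
    integrableOn_sub_mul_kernel hk hH (by fun_prop : Continuous _).aestronglyMeasurable
      (abs_mul_norm_sq_le hρ s) x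
  rw [nonlocalLaplacian_add (integrableOn_sub_mul_kernel hk hH hw hb x) (hint t),
    nonlocalLaplacian_const_mul,
    nonlocalLaplacian_norm_sq hk_even hxH (by simpa only [one_mul] using hint 1)]
  ring

lemma le_of_neg_le_nonlocalLaplacian (hk : Integrable k ν) (hk0 : 0 ≤ᵐ[ν] k)
    (hk_even : ∀ z, k (-z) = k z) (hk2 : 0 < ∫ z, ‖z‖ ^ 2 * k z ∂ν) (hH : MeasurableSet H)
    {ρ : ℝ} (hρ : H ⊆ closedBall 0 ρ) (hΩH : ∀ x ∈ Ω, ∀ y ∉ H, k (y - x) = 0)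
    (hw : AEStronglyMeasurable w (ν.restrict H)) {b : ℝ} (hb : ∀ y ∈ H, |w y| ≤ b)
    {η β : ℝ} (hη : 0 ≤ η) (hL : ∀ x ∈ Ω, -η ≤ nonlocalLaplacian ν H k w x)
    (hβ : ∀ x ∈ H \ Ω, w x ≤ β) :
    ∀ x ∈ H, w x ≤ β + η * ρ ^ 2 / (2 * ∫ z, ‖z‖ ^ 2 * k z ∂ν) := by
  intro x hx
  set m₂ := ∫ z, ‖z‖ ^ 2 * k z ∂ν
  have barrier : ∀ t > η / (2 * m₂), w x ≤ β + t * ρ ^ 2 := by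
    intro t ht
    have ht0 : 0 < t := (by positivity : 0 ≤ η / (2 * m₂)).trans_lt ht
    have hpos : 0 < 2 * t * m₂ - η := by
      rw [gt_iff_lt, div_lt_iff₀ (by positivity)] at ht
      linarith
    have hq : ∀ y ∈ H, t * ‖y‖ ^ 2 ≤ t * ρ ^ 2 := fun y hy => by
      simpa only [abs_of_pos ht0] using le_of_abs_le (abs_mul_norm_sq_le hρ t y hy)
    have hLt : ∀ y ∈ Ω, 2 * t * m₂ - η ≤
        nonlocalLaplacian ν H k (w + fun y => t * ‖y‖ ^ 2) y := fun y hy => by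
      rw [nonlocalLaplacian_add_mul_norm_sq hk hk_even hH hρ (hΩH y hy) hw hb]
      linarith [hL y hy]
    have hbdd : BddAbove ((w + fun y => t * ‖y‖ ^ 2) '' H) :=
      ⟨b + t * ρ ^ 2, forall_mem_image.2 fun y hy =>
        add_le_add (le_of_abs_le (hb y hy)) (hq y hy)⟩
    exact (le_add_of_nonneg_right (by positivity)).trans
      (le_of_forall_le_nonlocalLaplacian hk hk0 hH hbdd hpos hLt
        (fun y hy => add_le_add (hβ y hy) (hq y hy.1)) x hx)
  have hcont : Continuous fun t => β + t * ρ ^ 2 := by fun_prop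
  rw [← div_mul_eq_mul_div]
  exact ge_of_tendsto (hcont.tendsto _ |>.mono_left nhdsWithin_le_nhds)
    (Filter.eventually_of_mem (U := Ioi (η / (2 * m₂))) self_mem_nhdsWithin barrier)

lemma abs_le_of_abs_nonlocalLaplacian_le (hk : Integrable k ν) (hk0 : 0 ≤ᵐ[ν] k)
    (hk_even : ∀ z, k (-z) = k z) (hk2 : 0 < ∫ z, ‖z‖ ^ 2 * k z ∂ν) (hH : MeasurableSet H)
    {ρ : ℝ} (hρ : H ⊆ closedBall 0 ρ) (hΩH : ∀ x ∈ Ω, ∀ y ∉ H, k (y - x) = 0)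
    (hw : AEStronglyMeasurable w (ν.restrict H)) {b : ℝ} (hb : ∀ y ∈ H, |w y| ≤ b)
    {η β : ℝ} (hη : 0 ≤ η) (hL : ∀ x ∈ Ω, |nonlocalLaplacian ν H k w x| ≤ η)
    (hβ : ∀ x ∈ H \ Ω, |w x| ≤ β) :
    ∀ x ∈ H, |w x| ≤ β + η * ρ ^ 2 / (2 * ∫ z, ‖z‖ ^ 2 * k z ∂ν) := fun x hx =>
  abs_le'.2 ⟨le_of_neg_le_nonlocalLaplacian hk hk0 hk_even hk2 hH hρ hΩH hw hb hη
      (fun y hy => neg_le_of_abs_le (hL y hy)) (fun y hy => (le_abs_self _).trans (hβ y hy)) x hx,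
    le_of_neg_le_nonlocalLaplacian (w := -w) hk hk0 hk_even hk2 hH hρ hΩH hw.neg
      (fun y hy => (abs_neg (w y)).trans_le (hb y hy)) hη
      (fun y hy => nonlocalLaplacian_neg (w := w) ▸ neg_le_neg (le_of_abs_le (hL y hy)))
      (fun y hy => (neg_le_abs _).trans (hβ y hy)) x hx⟩

end Barrier

lemma rpow_le_of_le_of_one_le {x D s : ℝ} (hx : 0 ≤ x) (hxD : x ≤ D) (hD : 1 ≤ D) (hs : 0 ≤ s)
    (hs1 : s ≤ 1) : x ^ s ≤ D :=
  (Real.rpow_le_rpow hx hxD hs).trans (Real.rpow_le_self_of_one_le hD hs1)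

lemma energy_bound_le_mul_rpow {δ D μ B Λ K K' V P : ℝ} (hδ : 0 < δ) (hδD : δ ≤ D) (hD : 1 ≤ D)
    (hμ : μ ∈ Icc (0 : ℝ) 1) (hB : 0 ≤ B) (hΛ : 0 ≤ Λ) (hK : 0 ≤ K) (hK' : 0 ≤ K') (hV : 0 ≤ V)
    (hP : 0 ≤ P) :
    (B * δ ^ (2 + μ) + Λ * δ ^ 2 * P) *
        (Λ * δ ^ 2 * V + 4 * (B * δ ^ (2 + μ)) * (K / δ ^ 2) * (K' * δ)) ≤
      (B * D + Λ * P) * (Λ * V * D + 4 * B * K * K') * δ ^ (3 + μ) := by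
  have hμD : δ ^ μ ≤ D := rpow_le_of_le_of_one_le hδ.le hδD hD hμ.1 hμ.2
  have hμD' : δ ^ (1 - μ) ≤ D :=
    rpow_le_of_le_of_one_le hδ.le hδD hD (sub_nonneg.2 hμ.2) (sub_le_self 1 hμ.1)
  have hμ2 : δ ^ (2 + μ) = δ ^ 2 * δ ^ μ := by
    rw [Real.rpow_add hδ, Real.rpow_ofNat]
  have hμ1 : δ ^ (2 + μ) = δ * δ ^ (1 + μ) := by
    rw [← Real.rpow_one_add' hδ.le (by linarith [hμ.1])]
    ring_nf
  have hμ3 : δ ^ (3 + μ) = δ ^ 2 * δ ^ (1 + μ) := by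
    rw [← Real.rpow_ofNat, ← Real.rpow_add hδ]
    ring_nf
  have hδ2 : δ ^ 2 = δ ^ (1 - μ) * δ ^ (1 + μ) := by
    rw [← Real.rpow_add hδ, ← Real.rpow_ofNat]
    ring_nf
  have hfst : B * δ ^ (2 + μ) + Λ * δ ^ 2 * P ≤ (B * D + Λ * P) * δ ^ 2 := by
    calc _ = (B * δ ^ μ + Λ * P) * δ ^ 2 := by rw [hμ2]; ring
      _ ≤ _ := by gcongr
  have hsnd : Λ * δ ^ 2 * V + 4 * (B * δ ^ (2 + μ)) * (K / δ ^ 2) * (K' * δ) ≤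
      (Λ * V * D + 4 * B * K * K') * δ ^ (1 + μ) := by
    calc _ = (Λ * V * δ ^ (1 - μ) + 4 * B * K * K') * δ ^ (1 + μ) := by
          rw [hμ1]
          field_simp
          rw [hδ2]
          ring
      _ ≤ _ := by gcongr
  calc _ ≤ (B * D + Λ * P) * δ ^ 2 * ((Λ * V * D + 4 * B * K * K') * δ ^ (1 + μ)) := by gcongr
    _ = _ := by rw [hμ3]; ring

section Horizon

variable {d : ℕ} {Ω : Set (EuclideanSpace ℝ (Fin d))} {δ : ℝ}

lemma ball_subset_hatΩ {x : EuclideanSpace ℝ (Fin d)} (hx : x ∈ Ω) : ball x δ ⊆ hatΩ Ω δ := by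
  intro y hy
  by_cases hyΩ : y ∈ Ω
  · exact .inl hyΩ
  obtain ⟨p, hp, hyp⟩ := exists_mem_frontier_infDist_compl_eq_dist (s := Ωᶜ) hyΩ
    (compl_ne_univ.2 ⟨x, hx⟩)
  rw [frontier_compl] at hp
  rw [compl_compl] at hyp
  refine .inr ⟨hyΩ, ?_⟩
  calc infDist y (frontier Ω) ≤ dist y p := infDist_le_dist_of_mem hp
    _ = infDist y Ω := hyp.symm
    _ ≤ dist y x := infDist_le_dist_of_mem hx
    _ < δ := hy

lemma measurableSet_omegaC (hΩ : MeasurableSet Ω) : MeasurableSet (omegaC Ω δ) :=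
  hΩ.compl.inter (measurableSet_lt (continuous_infDist_pt _).measurable measurable_const)

lemma measurableSet_hatΩ (hΩ : MeasurableSet Ω) : MeasurableSet (hatΩ Ω δ) :=
  hΩ.union (measurableSet_omegaC hΩ)

variable [NeZero d]

-- `infDist y ∅ = 0`, so for `Ω = ∅` the set `omegaC Ω δ` is the whole space.
lemma frontier_nonempty_of_volume_omegaC_lt_top (hΩ : Bornology.IsBounded Ω) (hδ : 0 < δ)
    (hvol : volume (omegaC Ω δ) < ⊤) : (frontier Ω).Nonempty := by
  refine nonempty_frontier_iff.2 ⟨nonempty_iff_ne_empty.2 ?_, ?_⟩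
  · rintro rfl
    have huniv : omegaC (∅ : Set (EuclideanSpace ℝ (Fin d))) δ = univ := by simp [omegaC, hδ]
    simp [huniv] at hvol
  · rintro rfl
    simpa using hΩ.measure_lt_top (μ := volume)

lemma hatΩ_subset_closedBall {R : ℝ} (hR : Ω ⊆ closedBall 0 R) (hδ : 0 < δ)
    (hvol : volume (omegaC Ω δ) < ⊤) : hatΩ Ω δ ⊆ closedBall 0 (R + δ) := by
  refine union_subset (hR.trans (closedBall_subset_closedBall (by linarith))) fun y hy => ?_
  have hne := frontier_nonempty_of_volume_omegaC_lt_top (isBounded_closedBall.subset hR) hδ hvol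
  obtain ⟨p, hp, hyp⟩ := (infDist_lt_iff hne).1 hy.2
  have hpR : p ∈ closedBall 0 R :=
    closure_minimal hR isClosed_closedBall (frontier_subset_closure hp)
  rw [mem_closedBall] at hpR ⊢
  linarith [dist_triangle y p 0]

end Horizon

namespace RadialKernel

variable {d : ℕ} {δ : ℝ} {γ : ℝ → ℝ}

lemma measurable_comp_norm (hγ : RadialKernel d δ γ) :
    Measurable fun z : EuclideanSpace ℝ (Fin d) => γ ‖z‖ :=
  hγ.1.comp measurable_norm

lemma eq_zero_of_le (hγ : RadialKernel d δ γ) {s : ℝ} (hs : δ ≤ s) : γ s = 0 :=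
  hγ.2.2.1 s hs

lemma comp_norm_eq_zero_of_notMem_ball (hγ : RadialKernel d δ γ) {z : EuclideanSpace ℝ (Fin d)}
    (hz : z ∉ ball 0 δ) : γ ‖z‖ = 0 :=
  hγ.eq_zero_of_le (by simpa using hz)

lemma setIntegral_ball_comp_norm (hγ : RadialKernel d δ γ) :
    ∫ z in ball (0 : EuclideanSpace ℝ (Fin d)) δ, γ ‖z‖ =
      ∫ z : EuclideanSpace ℝ (Fin d), γ ‖z‖ :=
  setIntegral_eq_integral_of_forall_compl_eq_zero fun _ hz =>
    hγ.comp_norm_eq_zero_of_notMem_ball hz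

lemma comp_norm_sub_eq_zero (hγ : RadialKernel d δ γ) {Ω : Set (EuclideanSpace ℝ (Fin d))} :
    ∀ x ∈ Ω, ∀ y ∉ hatΩ Ω δ, γ ‖y - x‖ = 0 := fun _ hx _ hy =>
  hγ.eq_zero_of_le (not_lt.1 fun h => hy (ball_subset_hatΩ hx (mem_ball_iff_norm.2 h)))

lemma integrable_comp_norm (hγ : RadialKernel d δ γ)
    (hint : IntegrableOn (fun z : EuclideanSpace ℝ (Fin d) => γ ‖z‖) (ball 0 δ)) :
    Integrable fun z : EuclideanSpace ℝ (Fin d) => γ ‖z‖ :=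
  (integrableOn_iff_integrable_of_support_subset fun _ hz =>
    not_imp_comm.1 hγ.comp_norm_eq_zero_of_notMem_ball hz).1 hint

variable [NeZero d]

-- The value `γ 0` is unconstrained, and may be negative.
lemma ae_nonneg (hγ : RadialKernel d δ γ) :
    0 ≤ᵐ[volume] fun z : EuclideanSpace ℝ (Fin d) => γ ‖z‖ := by
  filter_upwards [Measure.ae_ne volume (0 : EuclideanSpace ℝ (Fin d))] with z hz
  rcases lt_or_ge ‖z‖ δ with h | h
  · exact (hγ.2.1 _ (norm_pos_iff.2 hz) h).le
  · exact (hγ.eq_zero_of_le h).ge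

lemma integral_norm_sq_mul (hγ : RadialKernel d δ γ) :
    ∫ z : EuclideanSpace ℝ (Fin d), ‖z‖ ^ 2 * γ ‖z‖ = d := by
  have hradial : ∫ s in Ioi (0 : ℝ), s ^ (d - 1) * (s ^ 2 * γ s) =
      ∫ s in Ioo 0 δ, s ^ (d + 1) * γ s := by
    simp only [← mul_assoc, ← pow_add, show d - 1 + 2 = d + 1 by have := NeZero.pos d; lia]
    refine setIntegral_eq_of_subset_of_forall_sdiff_eq_zero measurableSet_Ioi Ioo_subset_Ioi_self
      fun s hs => ?_
    rw [hγ.eq_zero_of_le (not_lt.1 fun h => hs.2 ⟨hs.1, h⟩), mul_zero]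
  rw [integral_fun_norm_addHaar volume fun s => s ^ 2 * γ s]
  simp only [finrank_euclideanSpace_fin, nsmul_eq_mul, smul_eq_mul, hradial]
  rw [← mul_assoc]
  exact hγ.2.2.2.2

lemma integrable_norm_sq_mul (hγ : RadialKernel d δ γ) :
    Integrable fun z : EuclideanSpace ℝ (Fin d) => ‖z‖ ^ 2 * γ ‖z‖ :=
  .of_integral_ne_zero (by rw [hγ.integral_norm_sq_mul]; exact NeZero.ne _)

lemma integral_iteratedFDeriv_two_mul (hγ : RadialKernel d δ γ) (u : EuclideanSpace ℝ (Fin d) → ℝ)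
    (x : EuclideanSpace ℝ (Fin d)) :
    ∫ z, (iteratedFDeriv ℝ 2 u x fun _ => z) * γ ‖z‖ = lap d u x := by
  simp only [iteratedFDeriv_two_apply, lap]
  rw [integral_bilin_mul_radial (EuclideanSpace.basisFun (Fin d) ℝ) hγ.1 hγ.integrable_norm_sq_mul,
    hγ.integral_norm_sq_mul, Fintype.card_fin, div_self (NeZero.ne _), mul_one]
  simp

lemma abs_nonlocalLaplacian_sub_lap_le (hγ : RadialKernel d δ γ)
    {H : Set (EuclideanSpace ℝ (Fin d))} {u : EuclideanSpace ℝ (Fin d) → ℝ}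
    {x : EuclideanSpace ℝ (Fin d)} {M : ℝ} (hH : ball x δ ⊆ H)
    (hint : IntegrableOn (fun y => (u y - u x) * γ ‖y - x‖) H)
    (hu : ∀ y ∈ ball x δ, ContDiffAt ℝ 4 u y) (hM : ∀ y ∈ ball x δ, ‖iteratedFDeriv ℝ 4 u y‖ ≤ M) :
    |nonlocalLaplacian volume H (fun z => γ ‖z‖) u x - lap d u x| ≤ M / 12 * δ ^ 2 * d := by
  rw [← hγ.integral_iteratedFDeriv_two_mul, ← hγ.integral_norm_sq_mul]
  exact abs_nonlocalLaplacian_sub_integral_iteratedFDeriv_le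
    hγ.measurable_comp_norm.aestronglyMeasurable hγ.ae_nonneg (fun z => by rw [norm_neg])
    (fun z => hγ.eq_zero_of_le) hγ.integrable_norm_sq_mul hH hint hu hM

lemma nonlocalEnergy_le (hγ : RadialKernel d δ γ) {Ω : Set (EuclideanSpace ℝ (Fin d))}
    (hint : Integrable fun z : EuclideanSpace ℝ (Fin d) => γ ‖z‖) (hΩ : MeasurableSet Ω)
    {ρ : ℝ} (hρ : hatΩ Ω δ ⊆ closedBall 0 ρ) {w : EuclideanSpace ℝ (Fin d) → ℝ}
    (hw : AEStronglyMeasurable w (volume.restrict (hatΩ Ω δ))) {b η β : ℝ}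
    (hb : ∀ y ∈ hatΩ Ω δ, |w y| ≤ b) (hη : 0 ≤ η)
    (hL : ∀ x ∈ Ω, |nonlocalLaplacian volume (hatΩ Ω δ) (fun z => γ ‖z‖) w x| ≤ η)
    (hβ : ∀ x ∈ omegaC Ω δ, |w x| ≤ β) :
    nonlocalEnergy volume (hatΩ Ω δ) (fun z => γ ‖z‖) w ≤
      (β + η * ρ ^ 2 / (2 * d)) * (η * volume.real Ω +
        4 * β * (∫ z : EuclideanSpace ℝ (Fin d), γ ‖z‖) * volume.real (omegaC Ω δ)) := by
  have hS : MeasurableSet (omegaC Ω δ) := measurableSet_omegaC hΩ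
  have heven (z : EuclideanSpace ℝ (Fin d)) : γ ‖-z‖ = γ ‖z‖ := by rw [norm_neg]
  have hm₂ : 0 < ∫ z : EuclideanSpace ℝ (Fin d), ‖z‖ ^ 2 * γ ‖z‖ := by
    rw [hγ.integral_norm_sq_mul]
    exact_mod_cast NeZero.pos d
  have hbdd : Bornology.IsBounded (hatΩ Ω δ) := isBounded_closedBall.subset hρ
  have hsup := abs_le_of_abs_nonlocalLaplacian_le hint hγ.ae_nonneg heven hm₂
    (measurableSet_hatΩ hΩ) hρ hγ.comp_norm_sub_eq_zero hw hb hη hL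
    fun x hx => hβ x (hx.1.resolve_left hx.2)
  rw [hγ.integral_norm_sq_mul] at hsup
  have henergy := nonlocalEnergy_union_le hγ.measurable_comp_norm hint hγ.ae_nonneg heven hΩ hS
    (disjoint_left.2 fun x hx hxS => hxS.1 hx) (hbdd.subset subset_union_left).measure_lt_top
    (hbdd.subset subset_union_right).measure_lt_top hw hsup hL hβ
  exact henergy.trans_eq (by ring)

lemma abs_nonlocalLaplacian_sub_le (hγ : RadialKernel d δ γ)
    {Ω : Set (EuclideanSpace ℝ (Fin d))}
    (hint : Integrable fun z : EuclideanSpace ℝ (Fin d) => γ ‖z‖) (hΩ : MeasurableSet Ω)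
    {u u₀ : EuclideanSpace ℝ (Fin d) → ℝ} {a b b₀ M : ℝ}
    (hu : AEStronglyMeasurable u (volume.restrict (hatΩ Ω δ))) (hb : ∀ y ∈ hatΩ Ω δ, |u y| ≤ b)
    (hb₀ : ∀ y ∈ hatΩ Ω δ, |u₀ y| ≤ b₀) (hu₀ : ∀ y ∈ hatΩ Ω δ, ContDiffAt ℝ 4 u₀ y)
    (hM : ∀ y ∈ hatΩ Ω δ, ‖iteratedFDeriv ℝ 4 u₀ y‖ ≤ M) {x : EuclideanSpace ℝ (Fin d)}
    (hx : x ∈ Ω)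
    (ha : |nonlocalLaplacian volume (hatΩ Ω δ) (fun z => γ ‖z‖) u x - lap d u₀ x| ≤ a) :
    |nonlocalLaplacian volume (hatΩ Ω δ) (fun z => γ ‖z‖) (u - u₀) x| ≤
      a + M / 12 * δ ^ 2 * d := by
  have hH : MeasurableSet (hatΩ Ω δ) := measurableSet_hatΩ hΩ
  have hu₀m : AEStronglyMeasurable u₀ (volume.restrict (hatΩ Ω δ)) :=
    ContinuousOn.aestronglyMeasurable
      (fun y hy => (hu₀ y hy).continuousAt.continuousWithinAt) hH
  have hint₀ := integrableOn_sub_mul_kernel hint hH hu₀m hb₀ x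
  have hball : ball x δ ⊆ hatΩ Ω δ := ball_subset_hatΩ hx
  rw [nonlocalLaplacian_sub (integrableOn_sub_mul_kernel hint hH hu hb x) hint₀,
    ← sub_sub_sub_cancel_right _ _ (lap d u₀ x)]
  exact (abs_sub _ _).trans (add_le_add ha (hγ.abs_nonlocalLaplacian_sub_lap_le hball hint₀
    (fun y hy => hu₀ y (hball hy)) fun y hy => hM y (hball hy)))

lemma nonlocalEnergy_le_mul_rpow (hγ : RadialKernel d δ γ) {Ω : Set (EuclideanSpace ℝ (Fin d))}
    (hint : Integrable fun z : EuclideanSpace ℝ (Fin d) => γ ‖z‖) (hΩ : MeasurableSet Ω)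
    {D ρ μ K K' : ℝ} (hδ : 0 < δ) (hδD : δ ≤ D) (hD : 1 ≤ D) (hμ : μ ∈ Icc (0 : ℝ) 1)
    (hK : 0 ≤ K) (hK' : 0 ≤ K') (hγK : ∫ z : EuclideanSpace ℝ (Fin d), γ ‖z‖ ≤ K / δ ^ 2)
    (hvol : volume.real (omegaC Ω δ) ≤ K' * δ) (hρ : hatΩ Ω δ ⊆ closedBall 0 ρ)
    {w : EuclideanSpace ℝ (Fin d) → ℝ} (hw : AEStronglyMeasurable w (volume.restrict (hatΩ Ω δ)))
    {b B Λ : ℝ} (hb : ∀ y ∈ hatΩ Ω δ, |w y| ≤ b) (hB : 0 ≤ B) (hΛ : 0 ≤ Λ)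
    (hL : ∀ x ∈ Ω, |nonlocalLaplacian volume (hatΩ Ω δ) (fun z => γ ‖z‖) w x| ≤ Λ * δ ^ 2)
    (hβ : ∀ x ∈ omegaC Ω δ, |w x| ≤ B * δ ^ (2 + μ)) :
    nonlocalEnergy volume (hatΩ Ω δ) (fun z => γ ‖z‖) w ≤
      (B * D + Λ * (ρ ^ 2 / (2 * d))) * (Λ * volume.real Ω * D + 4 * B * K * K') * δ ^ (3 + μ) :=
  calc nonlocalEnergy volume (hatΩ Ω δ) (fun z => γ ‖z‖) w
      ≤ (B * δ ^ (2 + μ) + Λ * δ ^ 2 * ρ ^ 2 / (2 * d)) * (Λ * δ ^ 2 * volume.real Ω +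
          4 * (B * δ ^ (2 + μ)) * (∫ z : EuclideanSpace ℝ (Fin d), γ ‖z‖) *
            volume.real (omegaC Ω δ)) :=
        hγ.nonlocalEnergy_le hint hΩ hρ hw hb (by positivity) hL hβ
    _ ≤ (B * δ ^ (2 + μ) + Λ * δ ^ 2 * (ρ ^ 2 / (2 * d))) * (Λ * δ ^ 2 * volume.real Ω +
          4 * (B * δ ^ (2 + μ)) * (K / δ ^ 2) * (K' * δ)) := by
        rw [mul_div_assoc]
        gcongr
    _ ≤ _ := energy_bound_le_mul_rpow hδ hδD hD hμ hB hΛ hK hK' measureReal_nonneg (by positivity)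

end RadialKernel

theorem stmt5_general {d : ℕ} [NeZero d] {Ω : Set (EuclideanSpace ℝ (Fin d))}
    (hΩb : Bornology.IsBounded Ω) (hΩ : MeasurableSet Ω) (δ₀ : ℝ) {μ : ℝ} (hμ : μ ∈ Icc (0 : ℝ) 1)
    {A B M K K' : ℝ} (hA : 0 ≤ A) (hB : 0 ≤ B) (hM : 0 ≤ M) (hK : 0 ≤ K) (hK' : 0 ≤ K') :
    ∃ C > 0, ∀ δ ∈ Ioc (0 : ℝ) δ₀, ∀ γ : ℝ → ℝ, RadialKernel d δ γ →
      IntegrableOn (fun z : EuclideanSpace ℝ (Fin d) => γ ‖z‖) (ball 0 δ) →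
      (∫ z in ball (0 : EuclideanSpace ℝ (Fin d)) δ, γ ‖z‖) ≤ K / δ ^ 2 →
      volume (omegaC Ω δ) ≤ ENNReal.ofReal (K' * δ) →
      ∀ u₀ : EuclideanSpace ℝ (Fin d) → ℝ,
        (∀ y ∈ hatΩ Ω δ, ContDiffAt ℝ 4 u₀ y) → (∃ b, ∀ y ∈ hatΩ Ω δ, |u₀ y| ≤ b) →
        (∀ y ∈ hatΩ Ω δ, ‖iteratedFDeriv ℝ 4 u₀ y‖ ≤ M) →
      ∀ f : EuclideanSpace ℝ (Fin d) → ℝ, (∀ x ∈ Ω, |f x - -lap d u₀ x| ≤ A * δ ^ 2) →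
      ∀ g : EuclideanSpace ℝ (Fin d) → ℝ,
        (∀ x ∈ omegaC Ω δ, |g x - u₀ x| ≤ B * δ ^ (2 + μ)) →
      ∀ u : EuclideanSpace ℝ (Fin d) → ℝ,
        AEStronglyMeasurable u (volume.restrict (hatΩ Ω δ)) →
        (∃ b, ∀ y ∈ hatΩ Ω δ, |u y| ≤ b) →
        (∀ x ∈ Ω, -nonlocalLaplacian volume (hatΩ Ω δ) (fun z => γ ‖z‖) u x = f x) →
        (∀ x ∈ omegaC Ω δ, u x = g x) →
      √(nonlocalEnergy volume (hatΩ Ω δ) (fun z => γ ‖z‖) (u - u₀)) ≤ C * δ ^ ((3 + μ) / 2) := by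
  obtain ⟨R, hR⟩ := hΩb.subset_closedBall 0
  set D := max 1 δ₀
  set Λ := A + M / 12 * d
  set C₀ := (B * D + Λ * ((R + δ₀) ^ 2 / (2 * d))) * (Λ * volume.real Ω * D + 4 * B * K * K')
  refine ⟨√C₀ + 1, by positivity, ?_⟩
  rintro δ ⟨hδ, hδδ₀⟩ γ hγ hγi hγK hvol u₀ hu₀ ⟨b₀, hb₀⟩ hu₀M f hf g hg u hu ⟨b, hb⟩ hLu hug
  have hint := hγ.integrable_comp_norm hγi
  have hρ : hatΩ Ω δ ⊆ closedBall 0 (R + δ₀) :=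
    (hatΩ_subset_closedBall hR hδ (hvol.trans_lt ENNReal.ofReal_lt_top)).trans
      (closedBall_subset_closedBall (by linarith))
  have hu₀m : AEStronglyMeasurable u₀ (volume.restrict (hatΩ Ω δ)) :=
    ContinuousOn.aestronglyMeasurable
      (fun y hy => (hu₀ y hy).continuousAt.continuousWithinAt) (measurableSet_hatΩ hΩ)
  have hL : ∀ x ∈ Ω, |nonlocalLaplacian volume (hatΩ Ω δ) (fun z => γ ‖z‖) (u - u₀) x| ≤
      Λ * δ ^ 2 := fun x hx => by
    have hres := hf x hx
    rw [← hLu x hx, ← neg_sub', abs_neg] at hres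
    exact (hγ.abs_nonlocalLaplacian_sub_le hint hΩ hu hb hb₀ hu₀ hu₀M hx hres).trans_eq (by ring)
  have henergy := hγ.nonlocalEnergy_le_mul_rpow hint hΩ hδ (le_max_of_le_right hδδ₀)
    (le_max_left _ _) hμ hK hK' (hγ.setIntegral_ball_comp_norm ▸ hγK)
    (ENNReal.toReal_le_of_le_ofReal (by positivity) hvol) hρ (hu.sub hu₀m)
    (fun y hy => (abs_sub _ _).trans (add_le_add (hb y hy) (hb₀ y hy))) hB (by positivity) hL
    fun x hx => (congrArg (|· - u₀ x|) (hug x hx)).trans_le (hg x hx)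
  calc _ ≤ √(C₀ * δ ^ (3 + μ)) := Real.sqrt_le_sqrt henergy
    _ = √C₀ * δ ^ ((3 + μ) / 2) := by
        rw [Real.sqrt_mul (by positivity), Real.sqrt_eq_rpow (_ ^ _), ← Real.rpow_mul hδ.le,
          mul_one_div]
    _ ≤ _ := by gcongr; exact le_add_of_nonneg_right zero_le_one

/-- convergence of nonlocal to local solutions in the nonlocal
energy norm. -/
theorem stmt5 (d : ℕ) (hd : 1 ≤ d) (Ω : Set (EuclideanSpace ℝ (Fin d)))
    (hΩb : Bornology.IsBounded Ω) (hΩo : IsOpen Ω)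
    (δ₀ : ℝ) (hδ₀ : δ₀ ∈ Ioc (0 : ℝ) 1) (μ : ℕ) (hμ : μ = 0 ∨ μ = 1)
    (A B M K K' : ℝ) (hA : 0 < A) (hB : 0 < B) (hM : 0 < M) (hK : 0 < K) (hK' : 0 < K') :
    ∃ C > 0, ∀ δ ∈ Ioc (0 : ℝ) δ₀, ∀ γ : ℝ → ℝ, RadialKernel d δ γ →
      IntegrableOn (fun z : EuclideanSpace ℝ (Fin d) => γ ‖z‖) (ball 0 δ) →
      (∫ z in ball (0 : EuclideanSpace ℝ (Fin d)) δ, γ ‖z‖) ≤ K / δ ^ 2 →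
      volume (omegaC Ω δ) ≤ ENNReal.ofReal (K' * δ) →
      ∀ u₀ : EuclideanSpace ℝ (Fin d) → ℝ,
        (∃ V, IsOpen V ∧ closure (hatΩ Ω δ) ⊆ V ∧ ContDiffOn ℝ 4 u₀ V) →
        (∀ y ∈ hatΩ Ω δ, ∀ j ≤ 4, ‖iteratedFDeriv ℝ j u₀ y‖ ≤ M) →
      ∀ f : EuclideanSpace ℝ (Fin d) → ℝ,
        (∀ x ∈ Ω, |f x - (-(lap d u₀ x))| ≤ A * δ ^ 2) →
      ∀ g : EuclideanSpace ℝ (Fin d) → ℝ,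
        (∀ x ∈ omegaC Ω δ, |g x - u₀ x| ≤ B * δ ^ (2 + μ)) →
      ∀ u : EuclideanSpace ℝ (Fin d) → ℝ, Measurable u →
        (∃ Mu : ℝ, ∀ x ∈ hatΩ Ω δ, |u x| ≤ Mu) →
        (∀ x ∈ Ω, -(2 * ∫ y in hatΩ Ω δ, (u y - u x) * γ ‖y - x‖) = f x) →
        (∀ x ∈ omegaC Ω δ, u x = g x) →
      Real.sqrt (∫ x in hatΩ Ω δ, ∫ y in hatΩ Ω δ,
          ((u y - u₀ y) - (u x - u₀ x)) ^ 2 * γ ‖y - x‖) ≤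
        C * δ ^ ((3 + (μ : ℝ)) / 2) := by
  have : NeZero d := ⟨by lia⟩
  have hμ01 : (μ : ℝ) ∈ Icc (0 : ℝ) 1 := by rcases hμ with rfl | rfl <;> norm_num
  obtain ⟨C, hC, h⟩ :=
    stmt5_general hΩb hΩo.measurableSet δ₀ hμ01 hA.le hB.le hM.le hK.le hK'.le
  exact ⟨C, hC, fun δ hδ γ hγ hγi hγK hvol u₀ ⟨V, hVo, hVH, hu₀⟩ hu₀M f hf g hg u hu =>
    h δ hδ γ hγ hγi hγK hvol u₀
      (fun y hy => hu₀.contDiffAt (hVo.mem_nhds (hVH (subset_closure hy))))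
      ⟨M, fun y hy => by simpa using hu₀M y hy 0 (Nat.zero_le 4)⟩ (fun y hy => hu₀M y hy 4 le_rfl)
      f hf g (fun x hx => by exact_mod_cast hg x hx) u hu.aestronglyMeasurable⟩
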